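/- arXiv:2312.13916 — 2 statements merged into one kernel-verified Lean document; each statement's English description precedes it below -/
import Mathlib

section
/- For every finite-index subgroup Γ̄ of PSL(2,ℤ), the short exact sequence 1 → {±I} → ξ⁻¹(Γ̄) → Γ̄ → 1 splits (that is, there exists a group homomorphism s : Γ̄ → SL(2,ℤ) with ξ ∘ s equal to the inclusion of Γ̄ into PSL(2,ℤ); equivalently, there exists a subgroup Γ of SL(2,ℤ) with ξ(Γ) = Γ̄ and −I ∉ Γ) if and only if Γ̄ contains no element of order 2. -/
open Matrix

/-- `SL(2,ℤ)`: the group of 2×2 integer matrices of determinant 1. -/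
abbrev SL2Z := Matrix.SpecialLinearGroup (Fin 2) ℤ

instance : Fact (Even (Fintype.card (Fin 2))) := ⟨by simp⟩

/-- The subgroup `{±I}` of `SL(2,ℤ)`. -/
def pmOne : Subgroup SL2Z := Subgroup.zpowers (-1 : SL2Z)

instance : pmOne.Normal := by
  constructor
  intro x hx g
  obtain ⟨n, rfl⟩ := hx
  have h : Commute ((-1 : SL2Z) ^ n) g := (Commute.neg_one_left g).zpow_left n
  refine ⟨n, ?_⟩
  rw [← h.eq, mul_assoc, mul_inv_cancel, mul_one]

/-- `PSL(2,ℤ)`, the modular group, as the quotient of `SL(2,ℤ)` by `{±I}`. -/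
abbrev PSL2Z := SL2Z ⧸ pmOne

/-- The natural projection `ξ : SL(2,ℤ) → PSL(2,ℤ)`. -/
def xi : SL2Z →* PSL2Z := QuotientGroup.mk' pmOne

/-- The element `S` of `PSL(2,ℤ)`, the image of `[[0,-1],[1,0]]`. -/
def Sp : PSL2Z := xi ⟨!![0, -1; 1, 0], by norm_num [Matrix.det_fin_two_of]⟩

/-- The element `T` of `PSL(2,ℤ)`, the image of `[[1,1],[0,1]]`. -/
def Tp : PSL2Z := xi ⟨!![1, 1; 0, 1], by norm_num [Matrix.det_fin_two_of]⟩

/-- The number of left cosets in `PSL(2,ℤ)/Γ` fixed by `g` (for the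
left-multiplication action).  For `g = S` this is `e₂(Γ)`, for `g = S*T` it is `e₃(Γ)`. -/
noncomputable def nFix (g : PSL2Z) (Γ : Subgroup PSL2Z) : ℕ :=
  Nat.card {x : PSL2Z ⧸ Γ // g • x = x}

/-- The number of orbits of the cyclic subgroup generated by `g` on `PSL(2,ℤ)/Γ`.
For `g = S, S*T, T` these are `c₂(Γ), c₃(Γ), h(Γ)` respectively. -/
noncomputable def nOrb (g : PSL2Z) (Γ : Subgroup PSL2Z) : ℕ :=
  Nat.card (MulAction.orbitRel.Quotient (Subgroup.zpowers g) (PSL2Z ⧸ Γ))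

/-- `Γ` has genus zero: `c₂(Γ) + c₃(Γ) + h(Γ) = index(Γ) + 2`. -/
def GenusZero (Γ : Subgroup PSL2Z) : Prop :=
  nOrb Sp Γ + nOrb (Sp * Tp) Γ + nOrb Tp Γ = Γ.index + 2

/-- `Γ` is torsion free: it contains no nontrivial element of finite order. -/
def TorsionFree (Γ : Subgroup PSL2Z) : Prop :=
  ∀ x ∈ Γ, x ≠ 1 → ¬ IsOfFinOrder x

/-- Two subgroups of a group are conjugate. -/
def SubgroupConj {G : Type*} [Group G] (H K : Subgroup G) : Prop :=
  ∃ g : G, Subgroup.map (MulAut.conj g).toMonoidHom H = K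

/-- The number of conjugacy classes of subgroups of `PSL(2,ℤ)` satisfying `P`. -/
noncomputable def countClasses (P : Subgroup PSL2Z → Prop) : ℕ :=
  Nat.card (Quot fun A B : {Γ : Subgroup PSL2Z // P Γ} => SubgroupConj A.1 B.1)

/-- The index of the torsion free subgroup `Γ^tf` associated to `Γ`:
`index(Γ) + 3·e₂(Γ) + 2·e₃(Γ)`. -/
noncomputable def tfIdx (Γ : Subgroup PSL2Z) : ℕ :=
  Γ.index + 3 * nFix Sp Γ + 2 * nFix (Sp * Tp) Γ

/-!
If `s` is a section and `x` has order two, then `(s x) ^ 2 = 1`, so `s x = ±I` and `x = 1`, a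
contradiction.

Conversely, `PSL(2,ℤ)` is the free product of `⟨S⟩ ≅ ℤ/2` and `⟨ST⟩ ≅ ℤ/3` (ping-pong on the sign
of the slope of the first column). The factor `⟨ST⟩` lifts to `SL(2,ℤ)` because `-ST` has order
three; the factor `⟨S⟩` does not, but it does after inducing from `Γ̄`: if `Γ̄` has no element of
order two, then `S` acts freely on `X = PSL(2,ℤ) ⧸ Γ̄`, so lifts `c x = ±S` can be chosen with
`c (S • x) = (c x)⁻¹`, and `(c, S)` is an involution of the wreath product
`(X → SL(2,ℤ)) ⋊ PSL(2,ℤ)`.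
The free product property extends these choices to a homomorphism into the wreath product, and
evaluating it at the base point of `X` is multiplicative on the stabilizer `Γ̄`.
-/

section Group

open Cardinal MulAction

variable {G H E X : Type*} [Group G] [Group H] [Group E]

theorem bijective_coprodI_lift_subtype_of_pingPong {ι α : Type*} [Nontrivial ι] [MulAction G α]
    {K : ι → Subgroup G} (hK : ⨆ i, K i = ⊤) (hcard : 3 ≤ #ι ∨ ∃ i, 3 ≤ #(K i))
    {A : ι → Set α} (hne : ∀ i, (A i).Nonempty) (hdisj : Pairwise (Function.onFun Disjoint A))
    (hpp : Pairwise fun i j ↦ ∀ g ∈ K i, g ≠ 1 → ∀ x ∈ A j, g • x ∈ A i) :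
    Function.Bijective (Monoid.CoprodI.lift fun i ↦ (K i).subtype) := by
  constructor
  · refine Monoid.CoprodI.lift_injective_of_ping_pong _ hcard A hne hdisj fun i j hij g hg ↦ ?_
    rintro _ ⟨x, hx, rfl⟩
    exact hpp hij g g.2 (by simpa using hg) x hx
  · rw [← MonoidHom.range_eq_top, Monoid.CoprodI.range_eq_iSup]
    simpa using hK

theorem exists_hom_of_bijective_coprodI_lift_zpowers {ι : Type*} {a : ι → G}
    (ha : Function.Bijective
      (Monoid.CoprodI.lift fun i ↦ (Subgroup.zpowers (a i)).subtype))
    {b : ι → H} (hb : ∀ i, orderOf (b i) ∣ orderOf (a i)) :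
    ∃ φ : G →* H, ∀ i, φ (a i) = b i := by
  let gen (i : ι) : Subgroup.zpowers (a i) := ⟨a i, Subgroup.mem_zpowers (a i)⟩
  have mem_zpowers_gen (i : ι) (x : Subgroup.zpowers (a i)) : x ∈ Subgroup.zpowers (gen i) := by
    obtain ⟨_, n, rfl⟩ := x
    exact ⟨n, rfl⟩
  have orderOf_dvd (i : ι) : orderOf (b i) ∣ orderOf (gen i) :=
    (Subgroup.orderOf_mk (a i) (Subgroup.mem_zpowers (a i))).symm ▸ hb i
  let e := MulEquiv.ofBijective _ ha
  let extend := Monoid.CoprodI.lift fun i ↦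
    monoidHomOfForallMemZpowers (mem_zpowers_gen i) (orderOf_dvd i)
  refine ⟨extend.comp e.symm.toMonoidHom, fun i ↦ ?_⟩
  let g : Monoid.CoprodI fun i ↦ Subgroup.zpowers (a i) :=
    Monoid.CoprodI.of (M := fun i ↦ Subgroup.zpowers (a i)) (gen i)
  have e_g : e g = a i := Monoid.CoprodI.lift_of _ _
  calc extend (e.symm (a i)) = extend g := by rw [← e_g, e.symm_apply_apply]
    _ = b i := (Monoid.CoprodI.lift_of _ _).trans (monoidHomOfForallMemZpowers_apply_gen _ _)

theorem exists_eq_or_eq_inv_and_apply_eq_inv {Y : Type*} [InvolutiveInv Y] {σ : X → X}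
    (hσ : Function.Involutive σ) (hfree : ∀ x, σ x ≠ x) (y : Y) :
    ∃ c : X → Y, (∀ x, c x = y ∨ c x = y⁻¹) ∧ ∀ x, c (σ x) = (c x)⁻¹ := by
  classical
  -- A well-order selects one point of each orbit `{x, σ x}`.
  refine ⟨fun x ↦ if WellOrderingRel x (σ x) then y else y⁻¹, fun x ↦ ite_eq_or_eq _ _ _,
    fun x ↦ ?_⟩
  simp only [hσ x]
  rcases trichotomous_of WellOrderingRel x (σ x) with h | h | h
  · rw [if_pos h, if_neg (asymm h)]
  · exact absurd h.symm (hfree x)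
  · rw [if_pos h, if_neg (asymm h), inv_inv]

theorem smul_ne_of_forall_orderOf_ne {K : Subgroup G} {a : G}
    (hK : ∀ x ∈ K, orderOf x ≠ orderOf a) (x : G ⧸ K) : a • x ≠ x := by
  obtain ⟨g, rfl⟩ := QuotientGroup.mk_surjective x
  intro hx
  have hconj : MulAut.conj g⁻¹ a ∈ K := by
    simpa [mul_assoc] using QuotientGroup.eq.1 hx.symm
  exact hK _ hconj (MulEquiv.orderOf_eq _ _)

theorem exists_section_iff_exists_map_eq_and_disjoint_ker (π : E →* G) (K : Subgroup G) :
    (∃ s : K →* E, ∀ x : K, π (s x) = x) ↔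
      ∃ L : Subgroup E, L.map π = K ∧ Disjoint L π.ker := by
  constructor
  · rintro ⟨s, hs⟩
    have hcomp : π.comp s = K.subtype := MonoidHom.ext hs
    refine ⟨s.range, by rw [MonoidHom.map_range, hcomp, K.range_subtype], ?_⟩
    rw [Subgroup.disjoint_def]
    rintro _ ⟨x, rfl⟩ hx
    have hx1 : x = 1 := Subtype.ext ((hs x).symm.trans hx)
    rw [hx1, map_one]
  · rintro ⟨L, rfl, hL⟩
    have hinj : Function.Injective (π.subgroupMap L) := by
      rw [injective_iff_map_eq_one]
      intro x hx
      exact Subtype.ext (Subgroup.disjoint_def.1 hL x.2 (congrArg Subtype.val hx))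
    let e := MulEquiv.ofBijective (π.subgroupMap L) ⟨hinj, π.subgroupMap_surjective L⟩
    exact ⟨L.subtype.comp e.symm.toMonoidHom, fun x ↦ congrArg Subtype.val (e.apply_symm_apply x)⟩

variable [MulAction G X]

variable (X) in
/-- The subgroup of the wreath product `(X → E) ⋊ G` of pairs `(f, g)` such that every value of `f`
is a lift of `g` along `π : E →* G`. Sections of its projection to `G` restrict to sections of `π`
over the stabilizers of the points of `X`. -/
def wreathLifts (π : E →* G) : Subgroup ((X → E) ⋊[mulAutArrow] G) where
  carrier := {w | ∀ x, π (w.left x) = w.right}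
  one_mem' _ := map_one π
  mul_mem' {v w} hv hw x := by
    change π (v.left x * w.left (v.right⁻¹ • x)) = v.right * w.right
    rw [map_mul, hv, hw]
  inv_mem' {w} hw x := by
    change π (w.left (w.right⁻¹⁻¹ • x))⁻¹ = w.right⁻¹
    rw [map_inv, hw]

namespace wreathLifts

variable {π : E →* G}

variable (X π) in
/-- The projection `(f, g) ↦ g`. -/
def proj : wreathLifts X π →* G := SemidirectProduct.rightHom.comp (Subgroup.subtype _)

variable (X π) in
/-- The diagonal embedding `y ↦ (x ↦ y, π y)`, which carries lifts of single elements of `G`, along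
with their relations, to the wreath product. -/
def diag : E →* wreathLifts X π where
  toFun y := ⟨⟨fun _ ↦ y, π y⟩, fun _ ↦ rfl⟩
  map_one' := Subtype.ext (SemidirectProduct.ext rfl (map_one π))
  map_mul' y z := Subtype.ext (SemidirectProduct.ext rfl (map_mul π y z))

theorem proj_diag (y : E) : proj X π (diag X π y) = π y := rfl

theorem exists_sq_eq_one_of_free_involution {a : G} (ha : a ^ 2 = 1)
    (hfree : ∀ x : X, a • x ≠ x) {y : E} (hy : π y = a) :
    ∃ w : wreathLifts X π, w ^ 2 = 1 ∧ proj X π w = a := by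
  have ha_inv : a⁻¹ = a := inv_eq_of_mul_eq_one_left (sq a ▸ ha)
  have hinvol : Function.Involutive (a • · : X → X) := fun x ↦ by
    simp only [smul_smul, ← sq, ha, one_smul]
  obtain ⟨c, hc, hc_smul⟩ := exists_eq_or_eq_inv_and_apply_eq_inv hinvol hfree y
  have hπc (x : X) : π (c x) = a := by
    rcases hc x with h | h <;> simp only [h, map_inv, hy, ha_inv]
  refine ⟨⟨⟨c, a⟩, hπc⟩, Subtype.ext (SemidirectProduct.ext (funext fun x ↦ ?_) ?_), rfl⟩
  · rw [sq]
    change c x * c (a⁻¹ • x) = 1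
    rw [ha_inv, hc_smul, mul_inv_cancel]
  · rw [sq]
    exact (sq a).symm.trans ha

theorem exists_section_stabilizer {φ : G →* wreathLifts X π}
    (hφ : (proj X π).comp φ = MonoidHom.id G) (x : X) :
    ∃ s : stabilizer G x →* E, ∀ g : stabilizer G x, π (s g) = g := by
  have hright (g : G) : (φ g).1.right = g := DFunLike.congr_fun hφ g
  refine ⟨MonoidHom.mk' (fun g ↦ (φ g).1.left x) fun g h ↦ ?_, fun g ↦ ?_⟩
  · have hg : (g : G)⁻¹ • x = x := inv_smul_eq_iff.2 g.2.symm
    calc (φ (g * h : G)).1.left x = (φ g).1.left x * (φ h).1.left ((φ g).1.right⁻¹ • x) := by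
          rw [map_mul]; rfl
      _ = (φ g).1.left x * (φ h).1.left x := by rw [hright, hg]
  · exact ((φ g).2 x).trans (hright g)

end wreathLifts

end Group

theorem mem_pmOne_iff {g : SL2Z} : g ∈ pmOne ↔ g = 1 ∨ g = -1 := by
  constructor
  · rintro ⟨n, rfl⟩
    exact (Int.even_or_odd n).imp Even.neg_one_zpow Odd.neg_one_zpow
  · rintro (rfl | rfl)
    · exact one_mem _
    · exact Subgroup.mem_zpowers _

theorem ker_xi : xi.ker = pmOne := QuotientGroup.ker_mk' pmOne

theorem xi_eq_one_iff {g : SL2Z} : xi g = 1 ↔ g = 1 ∨ g = -1 := by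
  rw [← MonoidHom.mem_ker, ker_xi, mem_pmOne_iff]

theorem xi_surjective : Function.Surjective xi := QuotientGroup.mk'_surjective pmOne

theorem xi_neg (g : SL2Z) : xi (-g) = xi g := by
  rw [← neg_one_mul, map_mul, xi_eq_one_iff.2 (Or.inr rfl), one_mul]

theorem disjoint_ker_xi_iff {Γ : Subgroup SL2Z} : Disjoint Γ xi.ker ↔ -1 ∉ Γ := by
  simp only [Subgroup.disjoint_def, MonoidHom.mem_ker, xi_eq_one_iff]
  constructor
  · intro h hneg
    exact absurd (h hneg (Or.inr rfl)) (by decide)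
  · rintro h g hg (rfl | rfl)
    · rfl
    · exact absurd hg h

theorem SL2Z.sq_eq_one_iff {g : SL2Z} : g ^ 2 = 1 ↔ g = 1 ∨ g = -1 := by
  refine ⟨fun h ↦ ?_, by rintro (rfl | rfl) <;> simp⟩
  have hinv : g.1 = g.1.adjugate := by
    rw [← Matrix.SpecialLinearGroup.coe_inv, ← eq_inv_of_mul_eq_one_left ((sq g).symm.trans h)]
  have hentries (i j : Fin 2) := congrFun₂ hinv i j
  simp only [adjugate_fin_two, Fin.forall_fin_two, of_apply, cons_val] at hentries
  obtain ⟨⟨h00, h01⟩, h10, -⟩ := hentries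
  have h01' : g 0 1 = 0 := by lia
  have h10' : g 1 0 = 0 := by lia
  have hdet : g 0 0 * g 0 0 = 1 := by
    have := g.det_coe
    rwa [det_fin_two, h01', h10', ← h00, mul_zero, sub_zero] at this
  rcases mul_self_eq_one_iff.1 hdet with h | h
  · left
    ext i j; fin_cases i <;> fin_cases j <;> simp [h01', h10', ← h00, h]
  · right
    ext i j; fin_cases i <;> fin_cases j <;> simp [h01', h10', ← h00, h]

theorem orderOf_ne_two_of_section {K : Subgroup PSL2Z} {s : K →* SL2Z}
    (hs : ∀ x : K, xi (s x) = x) : ∀ x ∈ K, orderOf x ≠ 2 := by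
  intro x hx hord
  have hsq : (⟨x, hx⟩ : K) ^ 2 = 1 := Subtype.ext (orderOf_dvd_iff_pow_eq_one.1 hord.dvd)
  have hsx : s ⟨x, hx⟩ ^ 2 = 1 := by rw [← map_pow, hsq, map_one]
  have hx1 : x = 1 := (hs ⟨x, hx⟩).symm.trans (xi_eq_one_iff.2 (SL2Z.sq_eq_one_iff.1 hsx))
  rw [hx1, orderOf_one] at hord
  exact absurd hord (by decide)

namespace PSL2Z

theorem xi_S : xi ModularGroup.S = Sp := rfl

theorem xi_neg_S_mul_T : xi (-(ModularGroup.S * ModularGroup.T)) = Sp * Tp := xi_neg _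

theorem orderOf_Sp : orderOf Sp = 2 := by
  rw [← xi_S]
  refine orderOf_eq_prime ?_ ?_
  · rw [← map_pow, xi_eq_one_iff]; decide
  · rw [Ne, xi_eq_one_iff]; decide

theorem neg_S_mul_T_pow_three : (-(ModularGroup.S * ModularGroup.T)) ^ 3 = 1 := by decide

theorem orderOf_Sp_mul_Tp : orderOf (Sp * Tp) = 3 := by
  rw [← xi_neg_S_mul_T]
  refine orderOf_eq_prime ?_ ?_
  · rw [← map_pow, neg_S_mul_T_pow_three, map_one]
  · rw [Ne, xi_eq_one_iff]; decide

theorem mem_zpowers_Sp_iff {p : PSL2Z} : p ∈ Subgroup.zpowers Sp ↔ p = 1 ∨ p = Sp := by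
  classical
  have hfin : IsOfFinOrder Sp := orderOf_pos_iff.1 (by rw [orderOf_Sp]; decide)
  rw [hfin.mem_zpowers_iff_mem_range_orderOf, orderOf_Sp]
  simp [Finset.range_add_one, or_comm]

theorem mem_zpowers_Sp_mul_Tp_iff {p : PSL2Z} :
    p ∈ Subgroup.zpowers (Sp * Tp) ↔ p = 1 ∨ p = Sp * Tp ∨ p = (Sp * Tp) ^ 2 := by
  classical
  have hfin : IsOfFinOrder (Sp * Tp) := orderOf_pos_iff.1 (by rw [orderOf_Sp_mul_Tp]; decide)
  rw [hfin.mem_zpowers_iff_mem_range_orderOf, orderOf_Sp_mul_Tp]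
  simp only [Finset.range_add_one, Finset.range_zero, insert_empty_eq, Finset.image_insert, pow_one,
    Finset.image_singleton, pow_zero, Finset.mem_insert, Finset.mem_singleton]
  tauto

theorem closure_Sp_Sp_mul_Tp : Subgroup.closure {Sp, Sp * Tp} = ⊤ := by
  have hS : Sp ∈ Subgroup.closure {Sp, Sp * Tp} := Subgroup.subset_closure (by simp)
  have hST : Sp * Tp ∈ Subgroup.closure {Sp, Sp * Tp} := Subgroup.subset_closure (by simp)
  have hT : Tp ∈ Subgroup.closure {Sp, Sp * Tp} := (Subgroup.mul_mem_cancel_left _ hS).1 hST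
  rw [eq_top_iff, ← MonoidHom.range_eq_top.2 xi_surjective,
    MonoidHom.range_eq_map, ← SpecialLinearGroup.SL2Z_generators, MonoidHom.map_closure,
    Subgroup.closure_le]
  rintro _ ⟨_, rfl | rfl, rfl⟩
  exacts [hS, hT]

/-- The product of the entries of the first column, well defined on `PSL(2,ℤ)` since it is even in
the matrix. Its sign is the sign of the slope of that column; it separates the two ping-pong
domains. -/
def firstColumnProd : PSL2Z → ℤ :=
  Quotient.lift (fun g : SL2Z ↦ g 0 0 * g 1 0) fun g h hgh ↦ by
    have hmem : g⁻¹ * h ∈ pmOne := QuotientGroup.leftRel_apply.1 hgh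
    rw [mem_pmOne_iff, inv_mul_eq_one, inv_mul_eq_iff_eq_mul] at hmem
    rcases hmem with rfl | rfl <;> simp

theorem firstColumnProd_xi (g : SL2Z) : firstColumnProd (xi g) = g 0 0 * g 1 0 := rfl

theorem firstColumnProd_xi_mul_xi (g h : SL2Z) : firstColumnProd (xi g * xi h) =
    (g 0 0 * h 0 0 + g 0 1 * h 1 0) * (g 1 0 * h 0 0 + g 1 1 * h 1 0) := by
  rw [← map_mul, firstColumnProd_xi]
  simp only [Matrix.SpecialLinearGroup.coe_mul, mul_apply, Fin.sum_univ_two]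

theorem firstColumnProd_Sp_mul (p : PSL2Z) : firstColumnProd (Sp * p) = -firstColumnProd p := by
  obtain ⟨g, rfl⟩ := xi_surjective p
  rw [← xi_S, firstColumnProd_xi_mul_xi, firstColumnProd_xi]
  simp [ModularGroup.coe_S, mul_comm]

theorem firstColumnProd_Sp_mul_Tp_mul_neg {p : PSL2Z} (hp : 0 < firstColumnProd p) :
    firstColumnProd (Sp * Tp * p) < 0 := by
  obtain ⟨g, rfl⟩ := xi_surjective p
  rw [firstColumnProd_xi] at hp
  have hST : (-(ModularGroup.S * ModularGroup.T)).1 = !![0, 1; -1, -1] := by decide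
  calc firstColumnProd (Sp * Tp * xi g) = -(g 0 0 * g 1 0 + g 1 0 ^ 2) := by
        rw [← xi_neg_S_mul_T, firstColumnProd_xi_mul_xi, hST]
        simp only [of_apply, cons_val', cons_val_zero, cons_val_one, cons_val_fin_one]
        ring
    _ < 0 := neg_neg_of_pos (by positivity)

theorem firstColumnProd_Sp_mul_Tp_sq_mul_neg {p : PSL2Z} (hp : 0 < firstColumnProd p) :
    firstColumnProd ((Sp * Tp) ^ 2 * p) < 0 := by
  obtain ⟨g, rfl⟩ := xi_surjective p
  rw [firstColumnProd_xi] at hp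
  have hST : ((-(ModularGroup.S * ModularGroup.T)) ^ 2).1 = !![-1, -1; 1, 0] := by decide
  calc firstColumnProd ((Sp * Tp) ^ 2 * xi g) = -(g 0 0 * g 1 0 + g 0 0 ^ 2) := by
        rw [← xi_neg_S_mul_T, ← map_pow, firstColumnProd_xi_mul_xi, hST]
        simp only [of_apply, cons_val', cons_val_zero, cons_val_one, cons_val_fin_one]
        ring
    _ < 0 := neg_neg_of_pos (by positivity)

theorem firstColumnProd_pos_of_mem_zpowers_Sp {g p : PSL2Z} (hg : g ∈ Subgroup.zpowers Sp)
    (hg1 : g ≠ 1) (hp : firstColumnProd p < 0) : 0 < firstColumnProd (g * p) := by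
  obtain rfl := (mem_zpowers_Sp_iff.1 hg).resolve_left hg1
  rwa [firstColumnProd_Sp_mul, neg_pos]

theorem firstColumnProd_neg_of_mem_zpowers_Sp_mul_Tp {g p : PSL2Z}
    (hg : g ∈ Subgroup.zpowers (Sp * Tp)) (hg1 : g ≠ 1) (hp : 0 < firstColumnProd p) :
    firstColumnProd (g * p) < 0 := by
  rcases (mem_zpowers_Sp_mul_Tp_iff.1 hg).resolve_left hg1 with rfl | rfl
  · exact firstColumnProd_Sp_mul_Tp_mul_neg hp
  · exact firstColumnProd_Sp_mul_Tp_sq_mul_neg hp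

theorem bijective_coprodI_lift_zpowers : Function.Bijective
    (Monoid.CoprodI.lift fun i ↦ (Subgroup.zpowers (![Sp, Sp * Tp] i)).subtype) := by
  have hpos : 0 < firstColumnProd (xi ⟨!![1, 0; 1, 1], by simp⟩) := Int.one_pos
  have hneg : firstColumnProd (Sp * xi ⟨!![1, 0; 1, 1], by simp⟩) < 0 := by
    rwa [firstColumnProd_Sp_mul, neg_lt_zero]
  have hdisj : Disjoint {p | 0 < firstColumnProd p} {p | firstColumnProd p < 0} :=
    Set.disjoint_left.2 fun p (h : 0 < firstColumnProd p) ↦ h.not_gt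
  have hcard : Nat.card (Subgroup.zpowers (Sp * Tp)) = 3 := by
    rw [Nat.card_zpowers, orderOf_Sp_mul_Tp]
  have : Finite (Subgroup.zpowers (Sp * Tp)) := Nat.finite_of_card_ne_zero (by rw [hcard]; decide)
  refine bijective_coprodI_lift_subtype_of_pingPong (α := PSL2Z)
    (A := ![{p | 0 < firstColumnProd p}, {p | firstColumnProd p < 0}]) ?_
    (Or.inr ⟨1, (congrArg Nat.cast hcard).symm.trans Nat.cast_card |>.le⟩)
    (Fin.forall_fin_two.2 ⟨⟨_, hpos⟩, ⟨_, hneg⟩⟩) ?_ ?_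
  · simp_rw [Subgroup.zpowers_eq_closure, ← Subgroup.closure_iUnion, Set.iUnion_singleton_eq_range,
      range_cons_cons_empty, closure_Sp_Sp_mul_Tp]
  · intro i j hij
    fin_cases i <;> fin_cases j
    exacts [absurd rfl hij, hdisj, hdisj.symm, absurd rfl hij]
  · intro i j hij g hg hg1 p hp
    fin_cases i <;> fin_cases j
    exacts [absurd rfl hij, firstColumnProd_pos_of_mem_zpowers_Sp hg hg1 hp,
      firstColumnProd_neg_of_mem_zpowers_Sp_mul_Tp hg hg1 hp, absurd rfl hij]

theorem exists_hom {H : Type*} [Group H] {s u : H} (hs : s ^ 2 = 1) (hu : u ^ 3 = 1) :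
    ∃ φ : PSL2Z →* H, φ Sp = s ∧ φ (Sp * Tp) = u := by
  obtain ⟨φ, hφ⟩ := exists_hom_of_bijective_coprodI_lift_zpowers bijective_coprodI_lift_zpowers
    (b := ![s, u]) (Fin.forall_fin_two.2
      ⟨(orderOf_dvd_of_pow_eq_one hs).trans orderOf_Sp.symm.dvd,
        (orderOf_dvd_of_pow_eq_one hu).trans orderOf_Sp_mul_Tp.symm.dvd⟩)
  exact ⟨φ, hφ 0, hφ 1⟩

theorem exists_section_stabilizer_of_forall_Sp_smul_ne {X : Type*} [MulAction PSL2Z X]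
    (hfree : ∀ x : X, Sp • x ≠ x) (x : X) :
    ∃ s : MulAction.stabilizer PSL2Z x →* SL2Z,
      ∀ g : MulAction.stabilizer PSL2Z x, xi (s g) = g := by
  obtain ⟨w, hw_sq, hw⟩ := wreathLifts.exists_sq_eq_one_of_free_involution
    (orderOf_dvd_iff_pow_eq_one.1 orderOf_Sp.dvd) hfree xi_S
  have hdiag_pow : wreathLifts.diag X xi (-(ModularGroup.S * ModularGroup.T)) ^ 3 = 1 := by
    rw [← map_pow, neg_S_mul_T_pow_three, map_one]
  obtain ⟨φ, hφS, hφST⟩ := exists_hom hw_sq hdiag_pow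
  refine wreathLifts.exists_section_stabilizer (φ := φ) ?_ x
  refine MonoidHom.eq_of_eqOn_dense closure_Sp_Sp_mul_Tp ?_
  rintro _ (rfl | rfl)
  · exact (congrArg _ hφS).trans hw
  · exact (congrArg _ hφST).trans ((wreathLifts.proj_diag _).trans xi_neg_S_mul_T)

end PSL2Z

theorem exists_section_of_forall_orderOf_ne_two {K : Subgroup PSL2Z}
    (hK : ∀ x ∈ K, orderOf x ≠ 2) : ∃ s : K →* SL2Z, ∀ x : K, xi (s x) = x := by
  have hfree (x : PSL2Z ⧸ K) : Sp • x ≠ x :=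
    smul_ne_of_forall_orderOf_ne (by rwa [PSL2Z.orderOf_Sp]) x
  have h := PSL2Z.exists_section_stabilizer_of_forall_Sp_smul_ne hfree ((1 : PSL2Z) : PSL2Z ⧸ K)
  rwa [MulAction.stabilizer_quotient] at h

theorem splitting_iff_no_order_two_general (Γb : Subgroup PSL2Z) :
    ((∃ s : Γb →* SL2Z, ∀ x : Γb, xi (s x) = (x : PSL2Z)) ↔ ∀ x ∈ Γb, orderOf x ≠ 2) ∧
    ((∃ Γ : Subgroup SL2Z, Subgroup.map xi Γ = Γb ∧ (-1 : SL2Z) ∉ Γ) ↔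
      ∀ x ∈ Γb, orderOf x ≠ 2) := by
  have section_iff : (∃ s : Γb →* SL2Z, ∀ x : Γb, xi (s x) = (x : PSL2Z)) ↔
      ∀ x ∈ Γb, orderOf x ≠ 2 :=
    ⟨fun ⟨_, hs⟩ ↦ orderOf_ne_two_of_section hs, exists_section_of_forall_orderOf_ne_two⟩
  have complement_iff := exists_section_iff_exists_map_eq_and_disjoint_ker xi Γb
  simp only [disjoint_ker_xi_iff] at complement_iff
  exact ⟨section_iff, complement_iff.symm.trans section_iff⟩

/-- The short exact sequence `1 → {±I} → ξ⁻¹(Γ̄) → Γ̄ → 1` splits (equivalently, there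
is a subgroup `Γ ≤ SL(2,ℤ)` with `ξ(Γ) = Γ̄` and `-I ∉ Γ`) iff `Γ̄` contains no element
of order 2. -/
theorem splitting_iff_no_order_two (Γb : Subgroup PSL2Z) (hfi : Γb.index ≠ 0) :
    ((∃ s : Γb →* SL2Z, ∀ x : Γb, xi (s x) = (x : PSL2Z)) ↔ ∀ x ∈ Γb, orderOf x ≠ 2) ∧
    ((∃ Γ : Subgroup SL2Z, Subgroup.map xi Γ = Γb ∧ (-1 : SL2Z) ∉ Γ) ↔
      ∀ x ∈ Γb, orderOf x ≠ 2) :=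
  splitting_iff_no_order_two_general Γb
end

section
/- For every n ≥ 1, the assignment sending a subgroup Γ̄ of PSL(2,ℤ) of index n to the triple (σ, α, e₀), where σ and α are the permutations of the n-element left-coset space PSL(2,ℤ)/Γ̄ induced by left multiplication by ST and by S respectively, and e₀ is the trivial coset, induces a bijection between the set of index-n subgroups of PSL(2,ℤ) and the set of equivalence classes of rooted hypermaps of size n, i.e. triples (σ, α, e₀) where σ, α are permutations of an n-element set E with σ³ = id, α² = id, the subgroup generated by σ and α acts transitively on E, and e₀ ∈ E is a marked point; here two triples are equivalent if there is a bijection of the underlying sets that simultaneously conjugates the two pairs of permutations into each other and carries marked point to marked point. -/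
open Matrix

/-- A rooted hypermap of size `n`: permutations `σ, α` of an `n`-element set with
`σ³ = 1`, `α² = 1`, generating a transitive subgroup, with a marked root. -/
structure RootedHypermap (n : ℕ) where
  sigma : Equiv.Perm (Fin n)
  alpha : Equiv.Perm (Fin n)
  root : Fin n
  sigma_cube : sigma ^ 3 = 1
  alpha_sq : alpha ^ 2 = 1
  trans : ∀ x y : Fin n, ∃ g ∈ Subgroup.closure ({sigma, alpha} : Set (Equiv.Perm (Fin n))), g x = y

/-- Equivalence of rooted hypermaps: a simultaneous conjugation carrying root to root. -/
def RootedHypermapEquiv {n : ℕ} (M N : RootedHypermap n) : Prop :=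
  ∃ ψ : Equiv.Perm (Fin n),
    (∀ x, ψ (M.sigma x) = N.sigma (ψ x)) ∧
    (∀ x, ψ (M.alpha x) = N.alpha (ψ x)) ∧ ψ M.root = N.root

/-!
The proof plays ping-pong with the Möbius action on the upper half-plane: `S` maps `{Re < 0}` into
`{Re > 0}`, while `ST` and `(ST)⁻¹` map `{Re > 0}` into `{Re < 0}`, so `PSL(2,ℤ)` is the free
product of `⟨S⟩` (order 2) and `⟨ST⟩` (order 3). A pair `(σ, α)` with `σ³ = α² = 1` is therefore the
same thing as an action of `PSL(2,ℤ)`, and a rooted hypermap is a pointed transitive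
`PSL(2,ℤ)`-set; these are classified by the stabilizer of the base point.
-/

section Zpowers

open Subgroup

variable {G : Type*} [Group G] {x h : G}

theorem eq_of_mem_zpowers_of_sq_eq_one (hx : x ^ 2 = 1) (hh : h ∈ zpowers x) (h1 : h ≠ 1) :
    h = x := by
  obtain ⟨m, rfl⟩ := mem_zpowers_iff.mp hh
  rw [zpow_eq_zpow_emod (n := 2) m (mod_cast hx)] at h1 ⊢
  rcases Int.emod_two_eq_zero_or_one m with hm | hm
  · simp [hm] at h1
  · simp [hm]

theorem eq_or_eq_inv_of_mem_zpowers_of_cube_eq_one (hx : x ^ 3 = 1) (hh : h ∈ zpowers x)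
    (h1 : h ≠ 1) : h = x ∨ h = x⁻¹ := by
  obtain ⟨m, rfl⟩ := mem_zpowers_iff.mp hh
  rw [zpow_eq_zpow_emod (n := 3) m (mod_cast hx)] at h1 ⊢
  have hm : m % 3 = 0 ∨ m % 3 = 1 ∨ m % 3 = 2 := by lia
  rcases hm with hm | hm | hm
  · simp [hm] at h1
  · simp [hm]
  · right
    rw [hm, eq_inv_iff_mul_eq_one, ← _root_.zpow_add_one]
    exact_mod_cast hx

end Zpowers

section PingPong

open Subgroup Cardinal
open scoped Pointwise Function

theorem exists_monoidHom_of_ping_pong {ι G K α : Type*} [Nontrivial ι] [Group G] [Group K]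
    [MulAction G α] {g : ι → G} (hgen : closure (Set.range g) = ⊤)
    (hcard : 3 ≤ #ι ∨ ∃ i, 3 ≤ #(zpowers (g i))) (X : ι → Set α) (hX : ∀ i, (X i).Nonempty)
    (hdisj : Pairwise (Disjoint on X))
    (hpp : Pairwise fun i j => ∀ h ∈ zpowers (g i), h ≠ 1 → h • X j ⊆ X i)
    {k : ι → K} (hk : ∀ i, orderOf (k i) ∣ orderOf (g i)) :
    ∃ φ : G →* K, ∀ i, φ (g i) = k i := by
  let γ (i : ι) : zpowers (g i) := ⟨g i, mem_zpowers (g i)⟩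
  have hγ (i : ι) (x : zpowers (g i)) : x ∈ zpowers (γ i) := by
    obtain ⟨m, hm⟩ := mem_zpowers_iff.mp x.2
    exact ⟨m, Subtype.ext hm⟩
  let F := Monoid.CoprodI.lift fun i => (zpowers (g i)).subtype
  have F_of (i : ι) : F (Monoid.CoprodI.of (γ i)) = g i := Monoid.CoprodI.lift_of _ _
  have F_injective : Function.Injective F :=
    Monoid.CoprodI.lift_injective_of_ping_pong _ hcard X hX hdisj fun i j hij h hh =>
      hpp hij h h.2 (by simpa using hh)
  have F_surjective : Function.Surjective F := by
    rw [← MonoidHom.range_eq_top, eq_top_iff, ← hgen, closure_le]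
    rintro _ ⟨i, rfl⟩
    exact ⟨_, F_of i⟩
  let E := MulEquiv.ofBijective F ⟨F_injective, F_surjective⟩
  let Ψ := Monoid.CoprodI.lift fun i =>
    monoidHomOfForallMemZpowers (hγ i) ((orderOf_mk (g i) (γ i).2).symm ▸ hk i)
  refine ⟨Ψ.comp E.symm.toMonoidHom, fun i => ?_⟩
  have E_symm_apply : E.symm (g i) = Monoid.CoprodI.of (M := fun i => zpowers (g i)) (γ i) :=
    E.symm_apply_eq.mpr (F_of i).symm
  calc Ψ (E.symm (g i)) = Ψ (Monoid.CoprodI.of (γ i)) := by rw [E_symm_apply]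
    _ = k i := by rw [Monoid.CoprodI.lift_of, monoidHomOfForallMemZpowers_apply_gen]

end PingPong

section Transitive

open MulAction Subgroup

variable {G X Y : Type*} [Group G] [MulAction G X] [MulAction G Y]

theorem map_smul_of_closure_eq_top {s : Set G} (hs : closure s = ⊤) {f : X → Y}
    (hf : ∀ g ∈ s, ∀ x, f (g • x) = g • f x) (g : G) (x : X) : f (g • x) = g • f x := by
  have hg : g ∈ closure s := hs ▸ mem_top g
  induction hg using closure_induction generalizing x with
  | mem g hg => exact hf g hg x
  | one => simp only [one_smul]
  | mul a b _ _ ha hb => rw [mul_smul, ha, hb, mul_smul]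
  | inv a _ ha => rw [eq_inv_smul_iff, ← ha, smul_inv_smul]

theorem stabilizer_map_of_injective {f : X → Y} (hf : Function.Injective f)
    (hsmul : ∀ (g : G) x, f (g • x) = g • f x) (x : X) :
    stabilizer G (f x) = stabilizer G x := by
  ext g
  rw [mem_stabilizer_iff, mem_stabilizer_iff, ← hsmul, hf.eq_iff]

theorem exists_equiv_quotient_of_stabilizer_eq [IsPretransitive G X] {x : X} {H : Subgroup G}
    (h : stabilizer G x = H) :
    ∃ e : X ≃ G ⧸ H, (∀ (g : G) y, e (g • y) = g • e y) ∧ e x = ((1 : G) : G ⧸ H) := by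
  subst h
  have hsurj : Function.Surjective (ofQuotientStabilizer G x) := fun y => by
    obtain ⟨g, hg⟩ := exists_smul_eq G x y
    exact ⟨(g : G ⧸ stabilizer G x), hg⟩
  let e := Equiv.ofBijective _ ⟨injective_ofQuotientStabilizer G x, hsurj⟩
  have e_smul (g : G) q : e (g • q) = g • e q := ofQuotientStabilizer_smul G x g q
  have e_one : e ((1 : G) : G ⧸ stabilizer G x) = x := one_smul G x
  refine ⟨e.symm, fun g y => ?_, ?_⟩
  · rw [Equiv.symm_apply_eq, e_smul, Equiv.apply_symm_apply]
  · rw [Equiv.symm_apply_eq, e_one]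

theorem exists_equiv_of_stabilizer_eq [IsPretransitive G X] [IsPretransitive G Y] {x : X} {y : Y}
    (h : stabilizer G x = stabilizer G y) :
    ∃ e : X ≃ Y, (∀ (g : G) z, e (g • z) = g • e z) ∧ e x = y := by
  obtain ⟨e₁, e₁_smul, e₁_x⟩ := exists_equiv_quotient_of_stabilizer_eq h
  obtain ⟨e₂, e₂_smul, e₂_y⟩ := exists_equiv_quotient_of_stabilizer_eq (Eq.refl (stabilizer G y))
  refine ⟨e₁.trans e₂.symm, fun g z => ?_, ?_⟩
  · simp only [Equiv.trans_apply, Equiv.symm_apply_eq, Equiv.apply_symm_apply, e₁_smul, e₂_smul]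
  · rw [Equiv.trans_apply, Equiv.symm_apply_eq, e₁_x, e₂_y]

end Transitive

section ModularGroup

open Subgroup UpperHalfPlane
open scoped Pointwise Function

theorem xi_neg_one : xi (-1) = 1 :=
  (QuotientGroup.eq_one_iff _).mpr (mem_zpowers _)

theorem Sp_sq : Sp ^ 2 = 1 := by
  have h : ModularGroup.S ^ 2 = -1 := by decide
  rw [← xi_neg_one, ← h, map_pow]
  rfl

theorem Sp_mul_Tp_cube : (Sp * Tp) ^ 3 = 1 := by
  have h : (ModularGroup.S * ModularGroup.T) ^ 3 = -1 := by decide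
  rw [← xi_neg_one, ← h, map_pow, map_mul]
  rfl

theorem closure_Sp_Sp_mul_Tp : Subgroup.closure {Sp, Sp * Tp} = ⊤ := by
  have hS : Sp ∈ Subgroup.closure {Sp, Sp * Tp} := subset_closure (by simp)
  have hST : Sp * Tp ∈ Subgroup.closure {Sp, Sp * Tp} := subset_closure (by simp)
  have hT : Tp ∈ Subgroup.closure {Sp, Sp * Tp} := (mul_mem_cancel_left hS).mp hST
  rw [eq_top_iff, ← MonoidHom.range_eq_top.mpr (QuotientGroup.mk'_surjective pmOne),
    MonoidHom.range_eq_map, ← SpecialLinearGroup.SL2Z_generators, map_le_iff_le_comap, closure_le]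
  rintro _ (rfl | rfl)
  · exact hS
  · exact hT

theorem closure_map_Sp_Sp_mul_Tp {K : Type*} [Group K] (φ : PSL2Z →* K) :
    Subgroup.closure {φ Sp, φ (Sp * Tp)} = φ.range := by
  rw [← Set.image_pair, ← MonoidHom.map_closure, closure_Sp_Sp_mul_Tp, MonoidHom.range_eq_map]

/-- The Möbius action of `PSL(2,ℤ)` on the upper half-plane. -/
noncomputable instance : MulAction PSL2Z ℍ :=
  MulAction.compHom ℍ <| QuotientGroup.lift pmOne (MulAction.toPermHom SL2Z ℍ) <| by
    rw [pmOne, zpowers_le, MonoidHom.mem_ker]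
    ext1 z
    simp

theorem Sp_smul (z : ℍ) : Sp • z = ModularGroup.S • z := rfl

theorem Tp_smul (z : ℍ) : Tp • z = ModularGroup.T • z := rfl

theorem re_Sp_smul (z : ℍ) : (Sp • z).re = -z.re / Complex.normSq z := by
  rw [Sp_smul, modular_S_smul]
  simp [neg_div]

theorem re_Sp_smul_pos {z : ℍ} : 0 < (Sp • z).re ↔ z.re < 0 := by
  rw [re_Sp_smul, div_pos_iff_of_pos_right z.normSq_pos, neg_pos]

theorem re_Sp_smul_neg {z : ℍ} : (Sp • z).re < 0 ↔ 0 < z.re := by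
  rw [re_Sp_smul, neg_div, neg_neg_iff_pos, div_pos_iff_of_pos_right z.normSq_pos]

theorem re_Tp_smul (z : ℍ) : (Tp • z).re = z.re + 1 := by
  rw [Tp_smul, ModularGroup.re_T_smul]

theorem re_Sp_mul_Tp_smul_neg {z : ℍ} (hz : 0 < z.re) : ((Sp * Tp) • z).re < 0 := by
  rw [mul_smul, re_Sp_smul_neg, re_Tp_smul]
  linarith

theorem re_Sp_mul_Tp_inv_smul_neg {z : ℍ} (hz : 0 < z.re) : ((Sp * Tp)⁻¹ • z).re < 0 := by
  have h := re_Tp_smul (Tp⁻¹ • Sp • z)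
  have hS : Sp⁻¹ = Sp := inv_eq_of_mul_eq_one_left (by rw [← sq, Sp_sq])
  rw [smul_inv_smul] at h
  rw [_root_.mul_inv_rev, hS, mul_smul]
  linarith [re_Sp_smul_neg.mpr hz]

theorem nonempty_re_pos : {z : ℍ | 0 < z.re}.Nonempty :=
  ⟨⟨⟨1, 1⟩, one_pos⟩, one_pos (α := ℝ)⟩

theorem nonempty_re_neg : {z : ℍ | z.re < 0}.Nonempty :=
  nonempty_re_pos.imp' (Sp • ·) fun _ => re_Sp_smul_neg.mpr

theorem orderOf_Sp : orderOf Sp = 2 := by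
  obtain ⟨z, hz⟩ := nonempty_re_pos
  refine orderOf_eq_prime Sp_sq fun h => lt_asymm (α := ℝ) hz ?_
  simpa only [h, one_smul] using re_Sp_smul_neg.mpr hz

theorem orderOf_Sp_mul_Tp : orderOf (Sp * Tp) = 3 := by
  obtain ⟨z, hz⟩ := nonempty_re_pos
  refine orderOf_eq_prime Sp_mul_Tp_cube fun h => lt_asymm (α := ℝ) hz ?_
  simpa only [h, one_smul] using re_Sp_mul_Tp_smul_neg hz

theorem three_le_card_zpowers_Sp_mul_Tp : 3 ≤ Cardinal.mk (zpowers (Sp * Tp)) := by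
  have : Finite (zpowers (Sp * Tp)) :=
    finite_zpowers.mpr (isOfFinOrder_iff_pow_eq_one.mpr ⟨3, three_pos, Sp_mul_Tp_cube⟩)
  rw [← Nat.cast_card, Nat.card_zpowers, orderOf_Sp_mul_Tp, Nat.cast_ofNat]

theorem smul_re_neg_subset_re_pos {h : PSL2Z} (hh : h ∈ zpowers Sp) (h1 : h ≠ 1) :
    h • {z : ℍ | z.re < 0} ⊆ {z | 0 < z.re} := by
  rw [eq_of_mem_zpowers_of_sq_eq_one Sp_sq hh h1, Set.smul_set_subset_iff]
  exact fun _ => re_Sp_smul_pos.mpr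

theorem smul_re_pos_subset_re_neg {h : PSL2Z} (hh : h ∈ zpowers (Sp * Tp)) (h1 : h ≠ 1) :
    h • {z : ℍ | 0 < z.re} ⊆ {z | z.re < 0} := by
  rw [Set.smul_set_subset_iff]
  rcases eq_or_eq_inv_of_mem_zpowers_of_cube_eq_one Sp_mul_Tp_cube hh h1 with rfl | rfl
  · exact fun _ => re_Sp_mul_Tp_smul_neg
  · exact fun _ => re_Sp_mul_Tp_inv_smul_neg

theorem exists_monoidHom_PSL2Z {K : Type*} [Group K] {a s : K} (ha : a ^ 2 = 1) (hs : s ^ 3 = 1) :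
    ∃ φ : PSL2Z →* K, φ Sp = a ∧ φ (Sp * Tp) = s := by
  let g : Fin 2 → PSL2Z := ![Sp, Sp * Tp]
  let k : Fin 2 → K := ![a, s]
  let X : Fin 2 → Set ℍ := ![{z | 0 < z.re}, {z | z.re < 0}]
  have hgen : Subgroup.closure (Set.range g) = ⊤ := by
    rw [Matrix.range_cons_cons_empty, closure_Sp_Sp_mul_Tp]
  have hX : ∀ i, (X i).Nonempty := Fin.forall_fin_two.mpr ⟨nonempty_re_pos, nonempty_re_neg⟩
  have hX01 : Disjoint (X 0) (X 1) := Set.disjoint_left.mpr fun _ => lt_asymm (α := ℝ)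
  have hdisj : Pairwise (Disjoint on X) := by
    simp [Pairwise, Fin.forall_fin_two, Function.onFun, hX01, hX01.symm]
  have hpp : Pairwise fun i j => ∀ h ∈ zpowers (g i), h ≠ 1 → h • X j ⊆ X i := by
    simp only [Pairwise, Fin.forall_fin_two]
    exact ⟨⟨fun h => (h rfl).elim, fun _ _ => smul_re_neg_subset_re_pos⟩,
      fun _ _ => smul_re_pos_subset_re_neg, fun h => (h rfl).elim⟩
  have hk : ∀ i, orderOf (k i) ∣ orderOf (g i) := Fin.forall_fin_two.mpr
    ⟨(orderOf_dvd_of_pow_eq_one ha).trans orderOf_Sp.symm.dvd,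
      (orderOf_dvd_of_pow_eq_one hs).trans orderOf_Sp_mul_Tp.symm.dvd⟩
  obtain ⟨φ, hφ⟩ := exists_monoidHom_of_ping_pong hgen (.inr ⟨1, three_le_card_zpowers_Sp_mul_Tp⟩)
    X hX hdisj hpp hk
  exact ⟨φ, hφ 0, hφ 1⟩

end ModularGroup

namespace RootedHypermap

open MulAction

variable {n : ℕ}

/-- The set on which a rooted hypermap lives, as a separate type for each hypermap, so that it can
carry the monodromy action as an instance. -/
def Dart (_ : RootedHypermap n) : Type := Fin n

/-- The homomorphism `PSL(2,ℤ) → Perm (Fin n)` sending `S` to `α` and `ST` to `σ`. -/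
noncomputable def monodromy (M : RootedHypermap n) : PSL2Z →* Equiv.Perm (Fin n) :=
  (exists_monoidHom_PSL2Z M.alpha_sq M.sigma_cube).choose

theorem monodromy_Sp (M : RootedHypermap n) : M.monodromy Sp = M.alpha :=
  (exists_monoidHom_PSL2Z M.alpha_sq M.sigma_cube).choose_spec.1

theorem monodromy_Sp_mul_Tp (M : RootedHypermap n) : M.monodromy (Sp * Tp) = M.sigma :=
  (exists_monoidHom_PSL2Z M.alpha_sq M.sigma_cube).choose_spec.2

/-- The monodromy action of `PSL(2,ℤ)` on the darts of a rooted hypermap. -/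
noncomputable instance (M : RootedHypermap n) : MulAction PSL2Z M.Dart :=
  MulAction.compHom (Fin n) M.monodromy

/-- The identification of the underlying set `Fin n` of a rooted hypermap with its darts. -/
def toDart (M : RootedHypermap n) : Fin n ≃ M.Dart := Equiv.refl _

theorem toDart_monodromy (M : RootedHypermap n) (g : PSL2Z) (x : Fin n) :
    M.toDart (M.monodromy g x) = g • M.toDart x := rfl

theorem toDart_alpha (M : RootedHypermap n) (x : Fin n) :
    M.toDart (M.alpha x) = Sp • M.toDart x := by
  rw [← toDart_monodromy, monodromy_Sp]

theorem toDart_sigma (M : RootedHypermap n) (x : Fin n) :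
    M.toDart (M.sigma x) = (Sp * Tp) • M.toDart x := by
  rw [← toDart_monodromy, monodromy_Sp_mul_Tp]

instance (M : RootedHypermap n) : IsPretransitive PSL2Z M.Dart where
  exists_smul_eq := by
    simp only [M.toDart.surjective.forall]
    intro x y
    obtain ⟨p, hp, hpxy⟩ := M.trans x y
    rw [← monodromy_Sp, ← monodromy_Sp_mul_Tp, Set.pair_comm, closure_map_Sp_Sp_mul_Tp] at hp
    obtain ⟨g, rfl⟩ := hp
    exact ⟨g, by rw [← toDart_monodromy, hpxy]⟩

/-- The stabilizer of the root under the monodromy action: the subgroup of `PSL(2,ℤ)`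
corresponding to a rooted hypermap. -/
noncomputable def rootStabilizer (M : RootedHypermap n) : Subgroup PSL2Z :=
  stabilizer PSL2Z (M.toDart M.root)

theorem index_rootStabilizer (M : RootedHypermap n) : M.rootStabilizer.index = n := by
  rw [rootStabilizer, index_stabilizer_of_transitive, ← Nat.card_congr M.toDart, Nat.card_fin]

theorem map_smul {M : RootedHypermap n} {X : Type*} [MulAction PSL2Z X] {f : M.Dart → X}
    (hσ : ∀ x, f (M.toDart (M.sigma x)) = (Sp * Tp) • f (M.toDart x))
    (hα : ∀ x, f (M.toDart (M.alpha x)) = Sp • f (M.toDart x))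
    (g : PSL2Z) (x : M.Dart) : f (g • x) = g • f x := by
  refine map_smul_of_closure_eq_top closure_Sp_Sp_mul_Tp ?_ g x
  simp only [M.toDart.surjective.forall]
  rintro _ (rfl | rfl) x
  · rw [← toDart_alpha, hα]
  · rw [← toDart_sigma, hσ]

theorem rootStabilizer_eq_stabilizer {M : RootedHypermap n} {X : Type*} [MulAction PSL2Z X]
    (e : Fin n ≃ X) (hσ : ∀ x, e (M.sigma x) = (Sp * Tp) • e x)
    (hα : ∀ x, e (M.alpha x) = Sp • e x) :
    M.rootStabilizer = stabilizer PSL2Z (e M.root) := by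
  let f : M.Dart ≃ X := M.toDart.symm.trans e
  have f_toDart (x : Fin n) : f (M.toDart x) = e x := congrArg e (M.toDart.symm_apply_apply x)
  have f_smul : ∀ (g : PSL2Z) x, f (g • x) = g • f x :=
    map_smul (by simpa only [f_toDart] using hσ) (by simpa only [f_toDart] using hα)
  rw [rootStabilizer, ← stabilizer_map_of_injective f.injective f_smul, f_toDart]

theorem rootedHypermapEquiv_iff {M N : RootedHypermap n} :
    RootedHypermapEquiv M N ↔ M.rootStabilizer = N.rootStabilizer := by
  constructor
  · rintro ⟨ψ, hσ, hα, hroot⟩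
    have h := rootStabilizer_eq_stabilizer (M := M) (ψ.trans N.toDart)
      (by simp only [Equiv.trans_apply, hσ, toDart_sigma, implies_true])
      (by simp only [Equiv.trans_apply, hα, toDart_alpha, implies_true])
    rw [h, Equiv.trans_apply, hroot, rootStabilizer]
  · intro h
    obtain ⟨ψ, ψ_smul, ψ_root⟩ := exists_equiv_of_stabilizer_eq h
    refine ⟨(M.toDart.trans ψ).trans N.toDart.symm, fun x => ?_, fun x => ?_, ?_⟩
    · simp only [Equiv.trans_apply, Equiv.symm_apply_eq, toDart_sigma, ψ_smul,
        Equiv.apply_symm_apply]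
    · simp only [Equiv.trans_apply, Equiv.symm_apply_eq, toDart_alpha, ψ_smul,
        Equiv.apply_symm_apply]
    · simp only [Equiv.trans_apply, Equiv.symm_apply_eq, ψ_root]

section OfTransitive

variable {X : Type*} [MulAction PSL2Z X] [IsPretransitive PSL2Z X]

/-- The rooted hypermap formed by the permutations induced by `ST` and `S` on a transitive
`PSL(2,ℤ)`-set `X` with base point `x₀`, transported to `Fin n` along a labelling `e`. -/
def ofTransitive (e : Fin n ≃ X) (x₀ : X) : RootedHypermap n :=
  let φ : PSL2Z →* Equiv.Perm (Fin n) :=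
    e.symm.permCongrHom.toMonoidHom.comp (toPermHom PSL2Z X)
  { sigma := φ (Sp * Tp)
    alpha := φ Sp
    root := e.symm x₀
    sigma_cube := by rw [← map_pow, Sp_mul_Tp_cube, map_one]
    alpha_sq := by rw [← map_pow, Sp_sq, map_one]
    trans x y := by
      obtain ⟨g, hg⟩ := exists_smul_eq PSL2Z (e x) (e y)
      rw [Set.pair_comm, closure_map_Sp_Sp_mul_Tp]
      exact ⟨φ g, ⟨g, rfl⟩, by simp [φ, hg]⟩ }

theorem rootStabilizer_ofTransitive (e : Fin n ≃ X) (x₀ : X) :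
    (ofTransitive e x₀).rootStabilizer = stabilizer PSL2Z x₀ := by
  rw [rootStabilizer_eq_stabilizer (M := ofTransitive e x₀) e
    (fun _ => e.apply_symm_apply _) fun _ => e.apply_symm_apply _]
  exact congrArg (stabilizer PSL2Z) (e.apply_symm_apply x₀)

end OfTransitive

theorem exists_rootStabilizer_eq (hn : 1 ≤ n) {Γ : Subgroup PSL2Z} (hΓ : Γ.index = n) :
    ∃ M : RootedHypermap n, M.rootStabilizer = Γ := by
  have : Γ.FiniteIndex := ⟨by lia⟩
  let e : Fin n ≃ PSL2Z ⧸ Γ := (Finite.equivFinOfCardEq hΓ).symm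
  exact ⟨ofTransitive e ((1 : PSL2Z) : PSL2Z ⧸ Γ),
    (rootStabilizer_ofTransitive e _).trans (stabilizer_quotient Γ)⟩

/-- The bijection from equivalence classes of rooted hypermaps to subgroups of `PSL(2,ℤ)`, taking
the class of `M` to the stabilizer of its root; the inverse of Millington's correspondence. -/
noncomputable def quotEquivSubgroup (hn : 1 ≤ n) :
    Quot (fun M N : RootedHypermap n => RootedHypermapEquiv M N) ≃
      {Γ : Subgroup PSL2Z // Γ.index = n} :=
  .ofBijective
    (Quot.lift (fun M => ⟨M.rootStabilizer, M.index_rootStabilizer⟩)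
      fun _ _ h => Subtype.ext (rootedHypermapEquiv_iff.mp h)) <| by
    constructor
    · rintro ⟨M⟩ ⟨N⟩ h
      exact Quot.sound (rootedHypermapEquiv_iff.mpr (congrArg Subtype.val h))
    · rintro ⟨Γ, hΓ⟩
      obtain ⟨M, hM⟩ := exists_rootStabilizer_eq hn hΓ
      exact ⟨Quot.mk _ M, Subtype.ext hM⟩

end RootedHypermap

/-- Millington's theorem: index-`n` subgroups of `PSL(2,ℤ)` are in bijection with
equivalence classes of rooted hypermaps of size `n`, the bijection being induced by the
left-multiplication action of `ST` and `S` on the coset space with root the trivial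
coset. -/
theorem subgroups_equiv_rooted_hypermaps (n : ℕ) (hn : 1 ≤ n) :
    ∃ f : {Γ : Subgroup PSL2Z // Γ.index = n} ≃
        Quot (fun M N : RootedHypermap n => RootedHypermapEquiv M N),
      ∀ Γ : {Γ : Subgroup PSL2Z // Γ.index = n},
        ∃ (M : RootedHypermap n) (e : Fin n ≃ PSL2Z ⧸ Γ.1),
          f Γ = Quot.mk _ M ∧
          e M.root = ((1 : PSL2Z) : PSL2Z ⧸ Γ.1) ∧
          (∀ x, e (M.sigma x) = (Sp * Tp) • e x) ∧
          (∀ x, e (M.alpha x) = Sp • e x) := by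
  let f := (RootedHypermap.quotEquivSubgroup hn).symm
  refine ⟨f, fun Γ => ?_⟩
  obtain ⟨M, hM⟩ := Quot.exists_rep (f Γ)
  have hΓ : M.rootStabilizer = Γ.1 := congrArg Subtype.val (f.symm_apply_eq.mpr hM)
  obtain ⟨e, e_smul, e_root⟩ := exists_equiv_quotient_of_stabilizer_eq hΓ
  refine ⟨M, M.toDart.trans e, hM.symm, e_root, fun x => ?_, fun x => ?_⟩
  · rw [Equiv.trans_apply, M.toDart_sigma, e_smul, Equiv.trans_apply]
  · rw [Equiv.trans_apply, M.toDart_alpha, e_smul, Equiv.trans_apply]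
end
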